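/- Let μ > 0 and let c be any real constant. Define on the unit square Ω = (0,1)×(0,1) the velocity field u = (u_x, u_y) with u_x(x,y) = −x·sin(xy) and u_y(x,y) = y·sin(xy), and the pressure P(x,y) = cos(xy) − c. Then for every (x,y) ∈ Ω the momentum equations −μ Δu_x + ∂P/∂x = g_x and −μ Δu_y + ∂P/∂y = g_y hold, where g_x(x,y) = −μ[sin(xy)·x·(x²+y²) − 2cos(xy)·y] − sin(xy)·y and g_y(x,y) = μ[sin(xy)·y·(x²+y²) − 2cos(xy)·x] − sin(xy)·x. -/

import Mathlib

open Real

/-- Partial derivative in the first (x) variable. -/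
noncomputable def pdx (f : ℝ → ℝ → ℝ) (x y : ℝ) : ℝ := deriv (fun s => f s y) x

/-- Partial derivative in the second (y) variable. -/
noncomputable def pdy (f : ℝ → ℝ → ℝ) (x y : ℝ) : ℝ := deriv (fun t => f x t) y

/-- Componentwise planar Laplacian ∂²/∂x² + ∂²/∂y². -/
noncomputable def lapl (f : ℝ → ℝ → ℝ) (x y : ℝ) : ℝ :=
  deriv (deriv (fun s => f s y)) x + deriv (deriv (fun t => f x t)) y

/-!
The velocity components and the pressure are built from functions of `x * y` alone. For these
`Δ (φ (x y)) = (x² + y²) φ'' (x y)`, and multiplying by a coordinate adds only a first-order term,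
`Δ (x F) = x ΔF + 2 ∂F/∂x`. The formulas in `y` follow by exchanging the two variables.
-/

theorem deriv_deriv_id_mul {𝕜 : Type*} [NontriviallyNormedField 𝕜] {f : 𝕜 → 𝕜} {x : 𝕜}
    (hf : ContDiffAt 𝕜 2 f x) :
    deriv (deriv fun s => s * f s) x = x * deriv (deriv f) x + 2 * deriv f x := by
  have leibniz := iteratedDeriv_mul (n := 2) contDiffAt_id hf
  simpa [Finset.sum_range_succ, iteratedDeriv_succ, iteratedDeriv_zero, Pi.mul_def,
    add_comm] using leibniz

theorem deriv_deriv_comp_mul_left {𝕜 F : Type*} [NontriviallyNormedField 𝕜]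
    [NormedAddCommGroup F] [NormedSpace 𝕜 F] (c : 𝕜) (f : 𝕜 → F) (x : 𝕜) :
    deriv (deriv fun s => f (c * s)) x = c ^ 2 • deriv (deriv f) (c * x) := by
  have deriv_eq : (deriv fun s => f (c * s)) = fun s => c • deriv f (c * s) :=
    funext fun s => deriv_comp_mul_left c f s
  rw [deriv_eq, deriv_fun_const_smul_field, deriv_comp_mul_left, smul_smul, sq]

theorem lapl_swap (f : ℝ → ℝ → ℝ) (x y : ℝ) : lapl (fun s t => f t s) x y = lapl f y x :=
  add_comm _ _

theorem lapl_neg (f : ℝ → ℝ → ℝ) (x y : ℝ) : lapl (fun s t => -f s t) x y = -lapl f x y := by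
  simp only [lapl, deriv.fun_neg', deriv.fun_neg, neg_add]

theorem lapl_fst_mul {f : ℝ → ℝ → ℝ} {x y : ℝ} (hf : ContDiffAt ℝ 2 (fun s => f s y) x) :
    lapl (fun s t => s * f s t) x y = x * lapl f x y + 2 * pdx f x y := by
  simp only [lapl, pdx, deriv_deriv_id_mul hf, deriv_const_mul_field']
  ring

theorem lapl_snd_mul {f : ℝ → ℝ → ℝ} {x y : ℝ} (hf : ContDiffAt ℝ 2 (f x) y) :
    lapl (fun s t => t * f s t) x y = y * lapl f x y + 2 * pdy f x y := by
  rw [lapl_swap fun t s => t * f s t, lapl_fst_mul hf, lapl_swap f]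
  rfl

theorem pdy_comp_mul (φ : ℝ → ℝ) (x y : ℝ) :
    pdy (fun s t => φ (s * t)) x y = x * deriv φ (x * y) :=
  deriv_comp_mul_left x φ y

theorem pdx_comp_mul (φ : ℝ → ℝ) (x y : ℝ) :
    pdx (fun s t => φ (s * t)) x y = y * deriv φ (x * y) := by
  simpa only [pdx, pdy, mul_comm _ y] using pdy_comp_mul φ y x

theorem lapl_comp_mul (φ : ℝ → ℝ) (x y : ℝ) :
    lapl (fun s t => φ (s * t)) x y = (x ^ 2 + y ^ 2) * deriv (deriv φ) (x * y) := by
  simp only [lapl, mul_comm _ y, deriv_deriv_comp_mul_left, smul_eq_mul]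
  ring

theorem lapl_fst_mul_comp_mul {φ : ℝ → ℝ} {x y : ℝ} (hφ : ContDiffAt ℝ 2 φ (x * y)) :
    lapl (fun s t => s * φ (s * t)) x y =
      x * (x ^ 2 + y ^ 2) * deriv (deriv φ) (x * y) + 2 * y * deriv φ (x * y) := by
  have slice_contDiffAt : ContDiffAt ℝ 2 (fun s => φ (s * y)) x :=
    hφ.comp x (contDiffAt_id.mul contDiffAt_const)
  rw [lapl_fst_mul (f := fun s t => φ (s * t)) slice_contDiffAt, lapl_comp_mul, pdx_comp_mul]
  ring

theorem lapl_snd_mul_comp_mul {φ : ℝ → ℝ} {x y : ℝ} (hφ : ContDiffAt ℝ 2 φ (x * y)) :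
    lapl (fun s t => t * φ (s * t)) x y =
      y * (x ^ 2 + y ^ 2) * deriv (deriv φ) (x * y) + 2 * x * deriv φ (x * y) := by
  have slice_contDiffAt : ContDiffAt ℝ 2 (fun t => φ (x * t)) y :=
    hφ.comp y (contDiffAt_const.mul contDiffAt_id)
  rw [lapl_snd_mul (f := fun s t => φ (s * t)) slice_contDiffAt, lapl_comp_mul, pdy_comp_mul]
  ring

theorem lapl_neg_fst_mul_sin (x y : ℝ) :
    lapl (fun x y => -x * sin (x * y)) x y =
      x * (x ^ 2 + y ^ 2) * sin (x * y) - 2 * y * cos (x * y) := by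
  simp only [neg_mul]
  rw [lapl_neg, lapl_fst_mul_comp_mul contDiff_sin.contDiffAt, Real.deriv_sin, Real.deriv_cos]
  ring

theorem lapl_snd_mul_sin (x y : ℝ) :
    lapl (fun x y => y * sin (x * y)) x y =
      2 * x * cos (x * y) - y * (x ^ 2 + y ^ 2) * sin (x * y) := by
  rw [lapl_snd_mul_comp_mul contDiff_sin.contDiffAt, Real.deriv_sin, Real.deriv_cos]
  ring

theorem pdx_cos_mul_sub_const (c x y : ℝ) :
    pdx (fun x y => cos (x * y) - c) x y = -(y * sin (x * y)) := by
  rw [pdx_comp_mul fun r => cos r - c, deriv_sub_const, Real.deriv_cos, mul_neg]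

theorem pdy_cos_mul_sub_const (c x y : ℝ) :
    pdy (fun x y => cos (x * y) - c) x y = -(x * sin (x * y)) := by
  rw [pdy_comp_mul fun r => cos r - c, deriv_sub_const, Real.deriv_cos, mul_neg]

theorem testProblem6_momentum_general (μ c x y : ℝ) :
    -μ * lapl (fun x y => -x * sin (x * y)) x y + pdx (fun x y => cos (x * y) - c) x y =
        -μ * (sin (x * y) * x * (x ^ 2 + y ^ 2) - 2 * cos (x * y) * y) - sin (x * y) * y ∧
      -μ * lapl (fun x y => y * sin (x * y)) x y + pdy (fun x y => cos (x * y) - c) x y =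
        μ * (sin (x * y) * y * (x ^ 2 + y ^ 2) - 2 * cos (x * y) * x) - sin (x * y) * x := by
  rw [lapl_neg_fst_mul_sin, lapl_snd_mul_sin, pdx_cos_mul_sub_const, pdy_cos_mul_sub_const]
  constructor <;> ring

theorem testProblem6_momentum (μ : ℝ) (hμ : 0 < μ) (c : ℝ) :
    ∀ x ∈ Set.Ioo (0:ℝ) 1, ∀ y ∈ Set.Ioo (0:ℝ) 1,
      -μ * lapl (fun x y => -x*Real.sin (x*y)) x y
          + pdx (fun x y => Real.cos (x*y) - c) x y = -μ*(Real.sin (x*y)*x*(x^2+y^2) - 2*Real.cos (x*y)*y) - Real.sin (x*y)*y ∧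
      -μ * lapl (fun x y => y*Real.sin (x*y)) x y
          + pdy (fun x y => Real.cos (x*y) - c) x y = μ*(Real.sin (x*y)*y*(x^2+y^2) - 2*Real.cos (x*y)*x) - Real.sin (x*y)*x :=
  fun x _ y _ => testProblem6_momentum_general μ c x y
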